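/- For every δ>0, every nonempty decreasing subset 𝒮₀ of 𝒮, and every z∈V_S: the functions Λ_{δ,𝒮₀} and Λ^z_{δ,𝒮₀} are lower semicontinuous on 𝒫(V_S), and for every M∈(0,∞) the level sets {μ∈𝒫(V_S) : Λ_{δ,𝒮₀}(μ)≤M} and {μ∈𝒫(V_S) : Λ^z_{δ,𝒮₀}(μ)≤M} are compact. -/

import Mathlib

open scoped BigOperators Classical ENNReal
open Filter Topology

noncomputable section
namespace ORRW

/-- Probability measures on a finite type `A`, topologized as a subset of `ℝ^A`. -/
abbrev ProbMeas (A : Type) [Fintype A] : Type :=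
  {p : A → ℝ // (∀ a, 0 ≤ p a) ∧ ∑ a, p a = 1}

/-- Relative entropy `R(γ‖ρ)` between two finitely supported "rows", valued in `EReal`,
with `+∞` when absolute continuity fails. -/
def relEnt {A : Type} [Fintype A] (γ ρ : A → ℝ) : EReal :=
  if ∀ a, ρ a = 0 → γ a = 0 then ((∑ a, γ a * Real.log (γ a / ρ a) : ℝ) : EReal)
  else (⊤ : EReal)

/-- `∫ R(q‖p) dν = Σ_a ν(a) · R(q(a,·)‖p(a,·))`. -/
def relEntInt {A : Type} [Fintype A] (ν : A → ℝ) (q p : A → A → ℝ) : EReal :=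
  ∑ a, (ν a : EReal) * relEnt (q a) (p a)

/-- `ν` is an invariant measure of the kernel `q`. -/
def Invariant {A : Type} [Fintype A] (ν : A → ℝ) (q : A → A → ℝ) : Prop :=
  ∀ y, ∑ x, ν x * q x y = ν y

/-- Extended-real logarithm: `⊥` at nonpositive arguments. -/
def elog (x : ℝ) : EReal := if x ≤ 0 then (⊥ : EReal) else ((Real.log x : ℝ) : EReal)

/-- Empirical measure of a finite trajectory `f : Fin (n+1) → A`. -/
def empMeas {A : Type} [Fintype A] [DecidableEq A] (n : ℕ) (f : Fin (n + 1) → A) :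
    ProbMeas A :=
  ⟨fun a => ((Finset.univ.filter (fun i => f i = a)).card : ℝ) / (n + 1),
    fun a => by positivity, by
      have key : ∑ a : A, ((Finset.univ.filter (fun i => f i = a)).card) = n + 1 := by
        have h := Finset.card_eq_sum_card_fiberwise
          (s := (Finset.univ : Finset (Fin (n + 1)))) (t := (Finset.univ : Finset A))
          (f := f) (fun i _ => Finset.mem_univ (f i))
        simpa using h.symm
      have key' : ∑ a : A, (((Finset.univ.filter (fun i => f i = a)).card : ℝ)) = (n : ℝ) + 1 := by
        have h2 := congrArg (fun m : ℕ => (m : ℝ)) key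
        push_cast at h2
        simpa using h2
      rw [← Finset.sum_div, key', div_self (by positivity)]⟩

section Graph

variable {V : Type} [Fintype V] [DecidableEq V]

/-- Weight of an edge given the set `F` of already traversed edges. -/
def gw (δ : ℝ) (F : Finset (Sym2 V)) (e : Sym2 V) : ℝ := if e ∈ F then δ else 1

/-- The transition kernel `p̂_F` on `V`. -/
def phat (G : SimpleGraph V) [DecidableRel G.Adj] (δ : ℝ) (F : Finset (Sym2 V))
    (x y : V) : ℝ :=
  if G.Adj x y then gw δ F s(x, y) / ∑ z ∈ G.neighborFinset x, gw δ F s(x, z) else 0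

/-- Two edges are adjacent iff they share a vertex. -/
def edgeAdj (e e' : Sym2 V) : Prop := ∃ v, v ∈ e ∧ v ∈ e'

/-- `x` is a vertex of the edge set `F`. -/
def memVerts (F : Finset (Sym2 V)) (x : V) : Prop := ∃ e ∈ F, x ∈ e

/-- `𝒯_G`: stochastic matrices on `V` adapted to `G`. -/
def TG (G : SimpleGraph V) : Set (V → V → ℝ) :=
  {q | (∀ x y, 0 ≤ q x y) ∧ (∀ x, ∑ y, q x y = 1) ∧ ∀ x y, q x y ≠ 0 → G.Adj x y}

/-- `𝒯(F)`: stochastic kernels from the vertex set of `F` to `V`, supported on `F`. -/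
def TE (F : Finset (Sym2 V)) : Set (V → V → ℝ) :=
  {q | (∀ x y, 0 ≤ q x y) ∧ (∀ x, memVerts F x → ∑ y, q x y = 1) ∧
    ∀ x y, q x y ≠ 0 → s(x, y) ∈ F}

/-- `ℰ`: admissible increasing sequences of traversed edge sets. -/
def seqE (G : SimpleGraph V) [DecidableRel G.Adj] (v₁ : V) :
    Set (Fin G.edgeFinset.card → Finset (Sym2 V)) :=
  {Es | (∀ k, Es k ⊆ G.edgeFinset) ∧ (∀ k, (Es k).card = (k : ℕ) + 1) ∧
    (∀ k l : Fin G.edgeFinset.card, (k : ℕ) + 1 = (l : ℕ) → Es k ⊂ Es l) ∧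
    (∀ k : Fin G.edgeFinset.card, (k : ℕ) = 0 → ∃ e ∈ Es k, v₁ ∈ e) ∧
    (∀ k l : Fin G.edgeFinset.card, (k : ℕ) + 1 = (l : ℕ) →
      ∀ e ∈ Es l \ Es k, ∃ e' ∈ Es k, edgeAdj e e')}

/-- The rate function `I_δ`. -/
def Ifun (G : SimpleGraph V) [DecidableRel G.Adj] (v₁ : V) (δ : ℝ) (ν : ProbMeas V) : EReal :=
  sInf { c : EReal |
    ∃ (νs : Fin G.edgeFinset.card → ProbMeas V) (r : Fin G.edgeFinset.card → ℝ)
      (Es : Fin G.edgeFinset.card → Finset (Sym2 V))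
      (qs : Fin G.edgeFinset.card → V → V → ℝ),
      Es ∈ seqE G v₁ ∧ (∀ k, 0 ≤ r k) ∧ (∑ k, r k = 1) ∧
      (∀ k x, (νs k).1 x ≠ 0 → memVerts (Es k) x) ∧
      (∀ x, ∑ k, r k * (νs k).1 x = ν.1 x) ∧
      (∀ k, qs k ∈ TE (Es k)) ∧ (∀ k, Invariant (νs k).1 (qs k)) ∧
      c = ∑ k, ((r k : ℝ) : EReal) * relEntInt (νs k).1 (qs k) (phat G δ (Es k)) }

/-- Edges traversed along a path, given as a list of consecutively visited vertices. -/
def pathEdges : List V → Finset (Sym2 V)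
  | [] => ∅
  | [_] => ∅
  | x :: y :: t => insert s(x, y) (pathEdges (y :: t))

/-- Product of one-step ORRW transition probabilities along a trajectory,
the trajectory being listed in reverse chronological order. -/
def stepsProb (G : SimpleGraph V) [DecidableRel G.Adj] (δ : ℝ) : List V → ℝ
  | [] => 1
  | [_] => 1
  | y :: x :: t => phat G δ (pathEdges (x :: t).reverse) x y * stepsProb G δ (x :: t)

/-- The law of `(X_0, …, X_n)` for the `δ`-ORRW started at `v₁`. -/
def trajProb (G : SimpleGraph V) [DecidableRel G.Adj] (δ : ℝ) (v₁ : V) (n : ℕ)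
    (f : Fin (n + 1) → V) : ℝ :=
  if f 0 = v₁ then stepsProb G δ (List.ofFn f).reverse else 0

/-- `P_{v₁}(L_{n+1} ∈ C)`: the probability that the empirical measure of the first
`n+1` positions of the `δ`-ORRW lies in `C`. -/
def probEmp (G : SimpleGraph V) [DecidableRel G.Adj] (δ : ℝ) (v₁ : V) (n : ℕ)
    (C : Set (ProbMeas V)) : ℝ :=
  ∑ f : Fin (n + 1) → V, if empMeas n f ∈ C then trajProb G δ v₁ n f else 0

/-- The family `𝒮` of edge sets of connected subgraphs having an edge at `v₁`. -/
def scrS (G : SimpleGraph V) [DecidableRel G.Adj] (v₁ : V) : Set (Finset (Sym2 V)) :=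
  {F | F ⊆ G.edgeFinset ∧ (∃ e ∈ F, v₁ ∈ e) ∧
    ∀ x y : V, memVerts F x → memVerts F y →
      (SimpleGraph.fromEdgeSet (↑F : Set (Sym2 V))).Reachable x y}

/-- `𝒮₀` is a decreasing subset of `𝒮`. -/
def DecreasingIn (G : SimpleGraph V) [DecidableRel G.Adj] (v₁ : V)
    (S0 : Set (Finset (Sym2 V))) : Prop :=
  ∀ F₁ F₂, F₁ ∈ scrS G v₁ → F₂ ∈ scrS G v₁ → F₁ ⊆ F₂ → F₂ ∈ S0 → F₁ ∈ S0

/-- `P_{v₁}(T_{𝒮₀} > n)`. -/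
def probTgt (G : SimpleGraph V) [DecidableRel G.Adj] (δ : ℝ) (v₁ : V)
    (S0 : Set (Finset (Sym2 V))) (n : ℕ) : ℝ :=
  ∑ f : Fin (n + 1) → V,
    if ∀ k, 1 ≤ k → k ≤ n → pathEdges ((List.ofFn f).take (k + 1)) ∈ S0 then
      trajProb G δ v₁ n f
    else 0

/-- `P_{v₁}(C_E > n)` for the edge cover time `C_E`. -/
def probCgt (G : SimpleGraph V) [DecidableRel G.Adj] (δ : ℝ) (v₁ : V) (n : ℕ) : ℝ :=
  ∑ f : Fin (n + 1) → V,
    if ¬ G.edgeFinset ⊆ pathEdges (List.ofFn f) then trajProb G δ v₁ n f else 0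

/-- `E_{v₁}[exp (α T_{𝒮₀})]`, valued in `ℝ≥0∞`; the stopping time takes values in
`{1, 2, …} ∪ {∞}`. -/
def expT (G : SimpleGraph V) [DecidableRel G.Adj] (δ : ℝ) (v₁ : V)
    (S0 : Set (Finset (Sym2 V))) (α : ℝ) : ℝ≥0∞ :=
  (∑' n : ℕ, ENNReal.ofReal
      (Real.exp (α * (n + 1)) * (probTgt G δ v₁ S0 n - probTgt G δ v₁ S0 (n + 1)))) +
    (if 0 < α then (⊤ : ℝ≥0∞) else if α = 0 then 1 else 0) *
      ENNReal.ofReal (⨅ n : ℕ, probTgt G δ v₁ S0 n)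

/-- `E_{v₁}[exp (α C_E)]`, valued in `ℝ≥0∞`. -/
def expC (G : SimpleGraph V) [DecidableRel G.Adj] (δ : ℝ) (v₁ : V) (α : ℝ) : ℝ≥0∞ :=
  (∑' n : ℕ, ENNReal.ofReal
      (Real.exp (α * (n + 1)) * (probCgt G δ v₁ n - probCgt G δ v₁ (n + 1)))) +
    (if 0 < α then (⊤ : ℝ≥0∞) else if α = 0 then 1 else 0) *
      ENNReal.ofReal (⨅ n : ℕ, probCgt G δ v₁ n)

/-- The critical exponent `α_c(δ)` attached to a family `𝒮₀` of edge sets. -/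
def alphaC (G : SimpleGraph V) [DecidableRel G.Adj] (δ : ℝ)
    (S0 : Set (Finset (Sym2 V))) : EReal :=
  sInf { c : EReal | ∃ (ν : ProbMeas V) (F : Finset (Sym2 V)) (q : V → V → ℝ),
    F ∈ S0 ∧ q ∈ TE F ∧ (∀ x, ν.1 x ≠ 0 → memVerts F x) ∧ Invariant ν.1 q ∧
    c = relEntInt ν.1 q (phat G δ F) }

/-- `α_c^1(δ)`: the critical exponent for the cover time. -/
def alphaC1 (G : SimpleGraph V) [DecidableRel G.Adj] (v₁ : V) (δ : ℝ) : EReal :=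
  alphaC G δ (scrS G v₁ \ {G.edgeFinset})

end Graph

section Lifted

variable {V : Type} [Fintype V] [LinearOrder V]

/-- Smaller endpoint of an unordered pair. -/
def sym2lo (e : Sym2 V) : V := Sym2.lift ⟨fun a b => min a b, fun a b => min_comm a b⟩ e

/-- Larger endpoint of an unordered pair. -/
def sym2hi (e : Sym2 V) : V := Sym2.lift ⟨fun a b => max a b, fun a b => max_comm a b⟩ e

/-- `V_S = E × {-1, 1}`: vertex set of the lifted directed graph `S`
(`true` plays the role of `+1`). -/
abbrev VSet (G : SimpleGraph V) [DecidableRel G.Adj] : Type :=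
  {e : Sym2 V // e ∈ G.edgeFinset} × Bool

/-- Tail `z⁻` of an oriented edge. -/
def zm (G : SimpleGraph V) [DecidableRel G.Adj] (z : VSet G) : V :=
  if z.2 then sym2lo z.1.1 else sym2hi z.1.1

/-- Head `z⁺` of an oriented edge. -/
def zp (G : SimpleGraph V) [DecidableRel G.Adj] (z : VSet G) : V :=
  if z.2 then sym2hi z.1.1 else sym2lo z.1.1

/-- The kernel `p_F` on the lifted directed graph `S`. -/
def pS (G : SimpleGraph V) [DecidableRel G.Adj] (δ : ℝ) (F : Finset (Sym2 V))
    (z₁ z₂ : VSet G) : ℝ :=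
  if zp G z₁ = zm G z₂ then
    gw δ F z₂.1.1 / ∑ w : VSet G, (if zp G z₁ = zm G w then gw δ F w.1.1 else 0)
  else 0

/-- `𝒯_S`: stochastic matrices on `V_S` moving along orientations. -/
def TS (G : SimpleGraph V) [DecidableRel G.Adj] : Set (VSet G → VSet G → ℝ) :=
  {q | (∀ z w, 0 ≤ q z w) ∧ (∀ z, ∑ w, q z w = 1) ∧ ∀ z w, q z w ≠ 0 → zp G z = zm G w}

/-- `𝒞(𝒮₀)`: probability measures on `V_S` whose first marginal is supported in
some member of `𝒮₀`. -/
def CC (G : SimpleGraph V) [DecidableRel G.Adj] (S0 : Set (Finset (Sym2 V))) :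
    Set (ProbMeas (VSet G)) :=
  {μ | ∃ F ∈ S0, ∀ z : VSet G, μ.1 z ≠ 0 → z.1.1 ∈ F}

/-- `Λ_{δ,𝒮₀}`. -/
def Lam (G : SimpleGraph V) [DecidableRel G.Adj] (v₁ : V) (δ : ℝ)
    (S0 : Set (Finset (Sym2 V))) (μ : ProbMeas (VSet G)) : EReal :=
  sInf { c : EReal |
    ∃ (μs : Fin G.edgeFinset.card → ProbMeas (VSet G)) (r : Fin G.edgeFinset.card → ℝ)
      (Es : Fin G.edgeFinset.card → Finset (Sym2 V))
      (qs : Fin G.edgeFinset.card → VSet G → VSet G → ℝ),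
      Es ∈ seqE G v₁ ∧ (∀ k, 0 ≤ r k) ∧ (∀ k, Es k ∉ S0 → r k = 0) ∧ (∑ k, r k = 1) ∧
      (∀ k z, (μs k).1 z ≠ 0 → z.1.1 ∈ Es k) ∧
      (∀ z, ∑ k, r k * (μs k).1 z = μ.1 z) ∧
      (∀ k, qs k ∈ TS G) ∧ (∀ k, Invariant (μs k).1 (qs k)) ∧
      c = ∑ k, ((r k : ℝ) : EReal) * relEntInt (μs k).1 (qs k) (pS G δ (Es k)) }

/-- `Λ^z_{δ,𝒮₀}`. -/
def LamZ (G : SimpleGraph V) [DecidableRel G.Adj] (v₁ : V) (δ : ℝ)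
    (S0 : Set (Finset (Sym2 V))) (z : VSet G) (μ : ProbMeas (VSet G)) : EReal :=
  sInf { c : EReal |
    ∃ (μs : Fin G.edgeFinset.card → ProbMeas (VSet G)) (r : Fin G.edgeFinset.card → ℝ)
      (Es : Fin G.edgeFinset.card → Finset (Sym2 V))
      (qs : Fin G.edgeFinset.card → VSet G → VSet G → ℝ),
      Es ∈ seqE G v₁ ∧ (∀ k : Fin G.edgeFinset.card, (k : ℕ) = 0 → Es k = {z.1.1}) ∧
      (∀ k, 0 ≤ r k) ∧ (∀ k, Es k ∉ S0 → r k = 0) ∧ (∑ k, r k = 1) ∧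
      (∀ k w, (μs k).1 w ≠ 0 → w.1.1 ∈ Es k) ∧
      (∀ w, ∑ k, r k * (μs k).1 w = μ.1 w) ∧
      (∀ k, qs k ∈ TS G) ∧ (∀ k, Invariant (μs k).1 (qs k)) ∧
      c = ∑ k, ((r k : ℝ) : EReal) * relEntInt (μs k).1 (qs k) (pS G δ (Es k)) }

/-- `Λ₁`: the Donsker–Varadhan functional for the simple random walk on `S`
(whose kernel is `pS` with `δ = 1`). -/
def Lam1 (G : SimpleGraph V) [DecidableRel G.Adj] (μ : ProbMeas (VSet G)) : EReal :=
  sInf { c : EReal | ∃ q ∈ TS G, Invariant μ.1 q ∧ c = relEntInt μ.1 q (pS G 1 ∅) }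

/-- Boundary `∂F` of an edge set: edges of `F` adjacent to some edge outside `F`. -/
def bdry (G : SimpleGraph V) [DecidableRel G.Adj] (F : Finset (Sym2 V)) : Finset (Sym2 V) :=
  F.filter fun e => ∃ e' ∈ G.edgeFinset \ F, edgeAdj e e'

/-- Out-degree `d(z)` of `z` in `S`. -/
def outDeg (G : SimpleGraph V) [DecidableRel G.Adj] (z : VSet G) : ℕ :=
  (Finset.univ.filter (fun w : VSet G => zp G z = zm G w)).card

/-- Number `k(z)` of out-neighbours of `z` lying in `F × {-1, 1}`. -/
def outDegIn (G : SimpleGraph V) [DecidableRel G.Adj] (F : Finset (Sym2 V))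
    (z : VSet G) : ℕ :=
  (Finset.univ.filter (fun w : VSet G => zp G z = zm G w ∧ w.1.1 ∈ F)).card

/-- The law of `(Z_0, …, Z_n)` for the lifted `δ`-ORRW conditioned on `Z_0 = z`. -/
def liftTraj (G : SimpleGraph V) [DecidableRel G.Adj] (δ : ℝ) (z : VSet G) (n : ℕ)
    (g : Fin (n + 1) → VSet G) : ℝ :=
  if g 0 = z then
    ∏ i : Fin n,
      pS G δ ((Finset.Iic i.castSucc).image (fun j => (g j).1.1))
        (g i.castSucc) (g i.succ)
  else 0

/-- The restricted logarithmic Laplace functional `W^{n+1}_{𝒮₀}(z)`. -/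
def Wres (G : SimpleGraph V) [DecidableRel G.Adj] (δ : ℝ) (z : VSet G)
    (S0 : Set (Finset (Sym2 V))) (h : ProbMeas (VSet G) → ℝ) (n : ℕ) : EReal :=
  if 0 < ∑ g : Fin (n + 1) → VSet G,
      (if empMeas n g ∈ CC G S0 then liftTraj G δ z n g else 0) then
    ((-((((n : ℝ) + 1))⁻¹ * Real.log (∑ g : Fin (n + 1) → VSet G,
      if empMeas n g ∈ CC G S0 then
        Real.exp (-((n : ℝ) + 1) * h (empMeas n g)) * liftTraj G δ z n g
      else 0)) : ℝ) : EReal)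
  else (⊤ : EReal)

end Lifted

/-!
Fix a sequence `Es` of edge sets. The weights `r`, the measures `μ_k` and the kernels `q_k` then
range over a compact set, because every constraint defines a closed subset of a product of
simplices. Since `δ > 0`, the kernel `p_{E_k}` charges every transition allowed in `𝒯_S`, so the
cost is finite and, as `x ↦ x * log x` is continuous at `0`, depends continuously on `(r, μ, q)`.
Minimizing a lower semicontinuous function over the fibres of a continuous map from a compact set
gives a lower semicontinuous function of the base point, here the barycenter `Σ_k r_k μ_k`.
Finally `Λ` and `Λ^z` are minima of such functions over finitely many `Es`, and `𝒫(V_S)` is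
compact, so closed sublevel sets are compact.
-/

section Semicontinuity

variable {X P β : Type*} [TopologicalSpace X] [TopologicalSpace P] [CompleteLinearOrder β]

theorem biInf_fiber_le_iff [T1Space P] {K : Set X} (hK : IsCompact K) {π : X → P}
    (hπ : Continuous π) {f : X → β} (hf : LowerSemicontinuousOn f K) {c : β} (hc : c < ⊤)
    (p : P) : ⨅ x ∈ K ∩ π ⁻¹' {p}, f x ≤ c ↔ ∃ x ∈ K ∩ π ⁻¹' {p}, f x ≤ c := by
  refine ⟨fun hle => ?_, fun ⟨x, hx, hxc⟩ => (biInf_le f hx).trans hxc⟩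
  have hne : (K ∩ π ⁻¹' {p}).Nonempty := by
    by_contra hempty
    rw [Set.not_nonempty_iff_eq_empty.1 hempty, iInf_emptyset, top_le_iff] at hle
    exact hc.ne hle
  have hfiber : IsCompact (K ∩ π ⁻¹' {p}) := hK.inter_right (isClosed_singleton.preimage hπ)
  obtain ⟨x, hx, hmin⟩ := (hf.mono Set.inter_subset_left).exists_isMinOn hne hfiber
  have hx_le : f x ≤ ⨅ y ∈ K ∩ π ⁻¹' {p}, f y := le_iInf₂ fun _ hy => hmin hy
  exact ⟨x, hx, hx_le.trans hle⟩

theorem lowerSemicontinuous_biInf_fiber [T2Space P] {K : Set X} (hK : IsCompact K) {π : X → P}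
    (hπ : Continuous π) {f : X → β} (hf : LowerSemicontinuousOn f K) :
    LowerSemicontinuous fun p => ⨅ x ∈ K ∩ π ⁻¹' {p}, f x := by
  refine lowerSemicontinuous_iff_isClosed_preimage.2 fun c => ?_
  rcases eq_or_ne c ⊤ with rfl | hc
  · simp only [Set.Iic_top, Set.preimage_univ, isClosed_univ]
  have hsublevel : (fun p => ⨅ x ∈ K ∩ π ⁻¹' {p}, f x) ⁻¹' Set.Iic c =
      π '' (K ∩ f ⁻¹' Set.Iic c) := by
    ext p
    rw [Set.mem_preimage, Set.mem_Iic, biInf_fiber_le_iff hK hπ hf hc.lt_top]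
    exact ⟨fun ⟨x, ⟨hxK, hxp⟩, hxc⟩ => ⟨x, ⟨hxK, hxc⟩, hxp⟩,
      fun ⟨x, ⟨hxK, hxc⟩, hxp⟩ => ⟨x, ⟨hxK, hxp⟩, hxc⟩⟩
  rw [hsublevel]
  exact ((hf.isCompact_inter_preimage_Iic hK c).image hπ).isClosed

theorem lowerSemicontinuous_biInf_of_finite {ι : Type*} {s : Set ι} (hs : s.Finite)
    {f : ι → P → β} (hf : ∀ i ∈ s, LowerSemicontinuous (f i)) :
    LowerSemicontinuous fun p => ⨅ i ∈ s, f i p := by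
  induction s, hs using Set.Finite.induction_on with
  | empty => simpa only [iInf_emptyset] using lowerSemicontinuous_const
  | insert _ _ ih =>
    simp only [iInf_insert]
    exact (hf _ (Set.mem_insert _ _)).inf (ih fun i hi => hf i (Set.mem_insert_of_mem _ hi))

end Semicontinuity

theorem lowerSemicontinuous_biInf_mixture {κ Z E : Type*} [Fintype κ] [TopologicalSpace Z]
    [TopologicalSpace E] [T2Space E] [AddCommMonoid E] [ContinuousAdd E] [Module ℝ E]
    [ContinuousSMul ℝ E] {R : Set (κ → ℝ)} (hR : IsCompact R) {C : κ → Set Z}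
    (hC : ∀ k, IsCompact (C k)) {m : Z → E} (hm : Continuous m) {f : κ → Z → ℝ}
    (hf : ∀ k, ContinuousOn (f k) (C k)) :
    LowerSemicontinuous fun e : E =>
      ⨅ x ∈ (R ×ˢ Set.univ.pi C) ∩ (fun x => ∑ k, x.1 k • m (x.2 k)) ⁻¹' {e},
        ((∑ k, x.1 k * f k (x.2 k) : ℝ) : EReal) := by
  refine lowerSemicontinuous_biInf_fiber (hR.prod (isCompact_univ_pi hC)) (by fun_prop) ?_
  have hcost : ContinuousOn (fun x : (κ → ℝ) × (κ → Z) => ∑ k, x.1 k * f k (x.2 k))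
      (R ×ˢ Set.univ.pi C) :=
    continuousOn_finsetSum _ fun k _ => ContinuousOn.mul (by fun_prop) <|
      (hf k).comp (by fun_prop) fun x hx => hx.2 k (Set.mem_univ k)
  exact (continuous_coe_real_ereal.comp_continuousOn hcost).lowerSemicontinuousOn

theorem ereal_coe_sum {ι : Type*} (s : Finset ι) (f : ι → ℝ) :
    ((∑ i ∈ s, f i : ℝ) : EReal) = ∑ i ∈ s, (f i : EReal) :=
  map_sum (⟨⟨Real.toEReal, EReal.coe_zero⟩, EReal.coe_add⟩ : ℝ →+ EReal) f s

section Simplex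

variable {ι : Type*} [Fintype ι]

/-- The face of the standard simplex spanned by the vertices in `s`: the probability vectors
supported in `s`. -/
def simplexFace (s : Set ι) : Set (ι → ℝ) :=
  stdSimplex ℝ ι ∩ {f | ∀ i, f i ≠ 0 → i ∈ s}

theorem isCompact_simplexFace (s : Set ι) : IsCompact (simplexFace s) := by
  refine (isCompact_stdSimplex ℝ ι).inter_right ?_
  have hzero : {f : ι → ℝ | ∀ i, f i ≠ 0 → i ∈ s} = ⋂ i ∈ sᶜ, {f | f i = 0} := by
    ext f
    simp only [Set.mem_ofPred_eq, Set.mem_iInter, Set.mem_compl_iff, not_imp_comm]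
  rw [hzero]
  exact isClosed_biInter fun i _ => isClosed_eq (continuous_apply i) continuous_const

end Simplex

section FiniteStateSpace

variable {A : Type} [Fintype A]

instance compactSpace_probMeas : CompactSpace (ProbMeas A) :=
  isCompact_iff_compactSpace.1 (isCompact_stdSimplex ℝ A)

theorem isClosed_setOf_invariant :
    IsClosed {x : (A → ℝ) × (A → A → ℝ) | Invariant x.1 x.2} := by
  simp only [Invariant, Set.ofPred_forall]
  exact isClosed_iInter fun b => isClosed_eq (by fun_prop) (by fun_prop)

/-- The real number `Σ_a ν(a) Σ_b q(a,b) log (q(a,b) / p(a,b))`, which is `∫ R(q‖p) dν` when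
`q(a,·)` is absolutely continuous with respect to `p(a,·)` for every `a`. -/
def relEntIntReal (ν : A → ℝ) (q p : A → A → ℝ) : ℝ :=
  ∑ a, ν a * ∑ b, q a b * Real.log (q a b / p a b)

theorem relEntInt_eq_coe_relEntIntReal (ν : A → ℝ) {q p : A → A → ℝ}
    (hqp : ∀ a b, p a b = 0 → q a b = 0) :
    relEntInt ν q p = (relEntIntReal ν q p : EReal) := by
  simp only [relEntInt, relEntIntReal, ereal_coe_sum, EReal.coe_mul, relEnt, if_pos (hqp _)]

theorem continuous_mul_log_div (p : ℝ) : Continuous fun x : ℝ => x * Real.log (x / p) := by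
  have hrescale : (fun x : ℝ => x * Real.log (x / p)) =
      fun x => p * (x / p * Real.log (x / p)) := by
    funext x
    rcases eq_or_ne p 0 with rfl | hp
    · simp only [div_zero, Real.log_zero, mul_zero]
    · rw [← mul_assoc, mul_div_cancel₀ x hp]
  rw [hrescale]
  exact continuous_const.mul (Real.continuous_mul_log.comp (continuous_id.div_const p))

theorem continuous_relEntIntReal (p : A → A → ℝ) :
    Continuous fun x : (A → ℝ) × (A → A → ℝ) => relEntIntReal x.1 x.2 p :=
  continuous_finsetSum _ fun a _ => Continuous.mul (by fun_prop) <|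
    continuous_finsetSum _ fun b _ => (continuous_mul_log_div (p a b)).comp
      (f := fun x : (A → ℝ) × (A → A → ℝ) => x.2 a b) (by fun_prop)

end FiniteStateSpace

theorem gw_pos {V : Type} [DecidableEq V] {δ : ℝ} (hδ : 0 < δ) (F : Finset (Sym2 V))
    (e : Sym2 V) : 0 < gw δ F e := by
  unfold gw
  split_ifs
  exacts [hδ, one_pos]

section RateFunction

variable {V : Type} [Fintype V] [LinearOrder V] (G : SimpleGraph V) [DecidableRel G.Adj]

theorem pS_pos {δ : ℝ} (hδ : 0 < δ) (F : Finset (Sym2 V)) {z w : VSet G}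
    (hzw : zp G z = zm G w) : 0 < pS G δ F z w := by
  have hsum : 0 < ∑ u : VSet G, if zp G z = zm G u then gw δ F u.1.1 else 0 := by
    refine Finset.sum_pos' (fun u _ => ?_) ⟨w, Finset.mem_univ w, ?_⟩
    · split_ifs
      exacts [(gw_pos hδ F _).le, le_rfl]
    · rw [if_pos hzw]
      exact gw_pos hδ F _
  rw [pS, if_pos hzw]
  exact div_pos (gw_pos hδ F _) hsum

theorem isCompact_TS : IsCompact (TS G) := by
  have hTS : TS G = Set.univ.pi fun z => simplexFace {w | zp G z = zm G w} := by
    ext q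
    simp only [TS, simplexFace, stdSimplex, Set.mem_ofPred_eq, Set.mem_inter_iff,
      Set.mem_univ_pi, forall_and, and_assoc]
  rw [hTS]
  exact isCompact_univ_pi fun z => isCompact_simplexFace _

theorem relEntInt_pS_of_mem_TS {δ : ℝ} (hδ : 0 < δ) (F : Finset (Sym2 V)) (ν : VSet G → ℝ)
    {q : VSet G → VSet G → ℝ} (hq : q ∈ TS G) :
    relEntInt ν q (pS G δ F) = (relEntIntReal ν q (pS G δ F) : EReal) :=
  relEntInt_eq_coe_relEntIntReal ν fun z w hzero => by
    by_contra hne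
    exact (pS_pos G hδ F (hq.2.2 z w hne)).ne' hzero

/-- Pairs `(ν, q)` of a probability vector `ν` supported in `F × {-1, 1}` and a kernel `q ∈ 𝒯_S`
leaving `ν` invariant: the possible values of `(μ_k, q_k)` when `E_k = F`. -/
def invariantPairs (F : Finset (Sym2 V)) : Set ((VSet G → ℝ) × (VSet G → VSet G → ℝ)) :=
  (simplexFace {z | z.1.1 ∈ F} ×ˢ TS G) ∩ {x | Invariant x.1 x.2}

theorem isCompact_invariantPairs (F : Finset (Sym2 V)) : IsCompact (invariantPairs G F) :=
  ((isCompact_simplexFace _).prod (isCompact_TS G)).inter_right isClosed_setOf_invariant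

/-- The elements `x = (r, (μ_k, q_k)_k)` admissible for a fixed sequence `Es` of edge sets and with
barycenter `Σ_k r_k μ_k` equal to `μ`. -/
def admissibleFiber (S0 : Set (Finset (Sym2 V))) (Es : Fin G.edgeFinset.card → Finset (Sym2 V))
    (μ : VSet G → ℝ) : Set ((Fin G.edgeFinset.card → ℝ) ×
      (Fin G.edgeFinset.card → (VSet G → ℝ) × (VSet G → VSet G → ℝ))) :=
  (simplexFace {k | Es k ∈ S0} ×ˢ Set.univ.pi fun k => invariantPairs G (Es k)) ∩
    (fun x => ∑ k, x.1 k • (x.2 k).1) ⁻¹' {μ}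

/-- The infimum defining `Λ_{δ,𝒮₀}(μ)`, restricted to a fixed sequence `Es` of edge sets. -/
def LamSeq (δ : ℝ) (S0 : Set (Finset (Sym2 V)))
    (Es : Fin G.edgeFinset.card → Finset (Sym2 V)) (μ : ProbMeas (VSet G)) : EReal :=
  ⨅ x ∈ admissibleFiber G S0 Es μ.1,
    ∑ k, (x.1 k : EReal) * relEntInt (x.2 k).1 (x.2 k).2 (pS G δ (Es k))

theorem lowerSemicontinuous_LamSeq {δ : ℝ} (hδ : 0 < δ) (S0 : Set (Finset (Sym2 V)))
    (Es : Fin G.edgeFinset.card → Finset (Sym2 V)) :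
    LowerSemicontinuous (LamSeq G δ S0 Es) := by
  have hreal : LamSeq G δ S0 Es = (fun μ : VSet G → ℝ => ⨅ x ∈ admissibleFiber G S0 Es μ,
      ((∑ k, x.1 k * relEntIntReal (x.2 k).1 (x.2 k).2 (pS G δ (Es k)) : ℝ) : EReal)) ∘
        Subtype.val := by
    funext μ
    refine biInf_congr fun x hx => ?_
    rw [ereal_coe_sum]
    refine Finset.sum_congr rfl fun k _ => ?_
    have hq : (x.2 k).2 ∈ TS G := (hx.1.2 k (Set.mem_univ k)).1.2
    rw [relEntInt_pS_of_mem_TS G hδ (Es k) _ hq, EReal.coe_mul]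
  rw [hreal]
  exact (lowerSemicontinuous_biInf_mixture (isCompact_simplexFace _)
    (fun k => isCompact_invariantPairs G (Es k)) continuous_fst
    fun k => (continuous_relEntIntReal _).continuousOn).comp continuous_subtype_val

theorem sInf_eq_biInf_LamSeq (δ : ℝ) (S0 : Set (Finset (Sym2 V)))
    (J : Set (Fin G.edgeFinset.card → Finset (Sym2 V))) (μ : ProbMeas (VSet G)) :
    sInf { c : EReal |
      ∃ (μs : Fin G.edgeFinset.card → ProbMeas (VSet G)) (r : Fin G.edgeFinset.card → ℝ)
        (Es : Fin G.edgeFinset.card → Finset (Sym2 V))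
        (qs : Fin G.edgeFinset.card → VSet G → VSet G → ℝ),
        Es ∈ J ∧ (∀ k, 0 ≤ r k) ∧ (∀ k, Es k ∉ S0 → r k = 0) ∧ (∑ k, r k = 1) ∧
        (∀ k z, (μs k).1 z ≠ 0 → z.1.1 ∈ Es k) ∧
        (∀ z, ∑ k, r k * (μs k).1 z = μ.1 z) ∧
        (∀ k, qs k ∈ TS G) ∧ (∀ k, Invariant (μs k).1 (qs k)) ∧
        c = ∑ k, ((r k : ℝ) : EReal) * relEntInt (μs k).1 (qs k) (pS G δ (Es k)) } =
      ⨅ Es ∈ J, LamSeq G δ S0 Es μ := by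
  apply le_antisymm
  · refine le_iInf₂ fun Es hEs => le_iInf₂ fun x hx => sInf_le ?_
    obtain ⟨⟨⟨⟨hr0, hr1⟩, hrS0⟩, hpairs⟩, hbary⟩ := hx
    have hpair k := hpairs k (Set.mem_univ k)
    exact ⟨fun k => ⟨(x.2 k).1, (hpair k).1.1.1⟩, x.1, Es, fun k => (x.2 k).2, hEs, hr0,
      fun k => not_imp_comm.1 (hrS0 k), hr1, fun k => (hpair k).1.1.2,
      fun z => by simpa using congrFun hbary z, fun k => (hpair k).1.2,
      fun k => (hpair k).2, rfl⟩
  · refine le_sInf ?_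
    rintro _ ⟨μs, r, Es, qs, hEs, hr0, hrS0, hr1, hsupp, hbary, hqs, hinv, rfl⟩
    refine iInf₂_le_of_le Es hEs (iInf₂_le (r, fun k => ((μs k).1, qs k)) ?_)
    exact ⟨⟨⟨⟨hr0, hr1⟩, fun k => not_imp_comm.1 (hrS0 k)⟩,
      fun k _ => ⟨⟨⟨(μs k).2, hsupp k⟩, hqs k⟩, hinv k⟩⟩, funext fun z => by simpa using hbary z⟩

theorem Lam_eq_biInf_LamSeq (v₁ : V) (δ : ℝ) (S0 : Set (Finset (Sym2 V))) :
    Lam G v₁ δ S0 = fun μ => ⨅ Es ∈ seqE G v₁, LamSeq G δ S0 Es μ :=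
  funext fun μ => sInf_eq_biInf_LamSeq G δ S0 (seqE G v₁) μ

theorem LamZ_eq_biInf_LamSeq (v₁ : V) (δ : ℝ) (S0 : Set (Finset (Sym2 V))) (z : VSet G) :
    LamZ G v₁ δ S0 z = fun μ =>
      ⨅ Es ∈ {Es ∈ seqE G v₁ | ∀ k : Fin G.edgeFinset.card, (k : ℕ) = 0 → Es k = {z.1.1}},
        LamSeq G δ S0 Es μ := by
  funext μ
  rw [← sInf_eq_biInf_LamSeq]
  simp only [LamZ, Set.mem_ofPred_eq, and_assoc]

theorem lowerSemicontinuous_Lam (v₁ : V) {δ : ℝ} (hδ : 0 < δ) (S0 : Set (Finset (Sym2 V))) :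
    LowerSemicontinuous (Lam G v₁ δ S0) := by
  rw [Lam_eq_biInf_LamSeq]
  exact lowerSemicontinuous_biInf_of_finite (Set.toFinite _) fun Es _ =>
    lowerSemicontinuous_LamSeq G hδ S0 Es

theorem lowerSemicontinuous_LamZ (v₁ : V) {δ : ℝ} (hδ : 0 < δ) (S0 : Set (Finset (Sym2 V)))
    (z : VSet G) : LowerSemicontinuous (LamZ G v₁ δ S0 z) := by
  rw [LamZ_eq_biInf_LamSeq]
  exact lowerSemicontinuous_biInf_of_finite (Set.toFinite _) fun Es _ =>
    lowerSemicontinuous_LamSeq G hδ S0 Es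

end RateFunction

theorem orrw_Lam_lsc_compact_general {V : Type} [Fintype V] [LinearOrder V]
    (G : SimpleGraph V) [DecidableRel G.Adj] (v₁ : V) {δ : ℝ} (hδ : 0 < δ)
    (S0 : Set (Finset (Sym2 V))) :
    LowerSemicontinuous (Lam G v₁ δ S0) ∧
    (∀ z : VSet G, LowerSemicontinuous (LamZ G v₁ δ S0 z)) ∧
    (∀ M : EReal, IsCompact {μ : ProbMeas (VSet G) | Lam G v₁ δ S0 μ ≤ M}) ∧
    (∀ z : VSet G, ∀ M : EReal, IsCompact {μ : ProbMeas (VSet G) | LamZ G v₁ δ S0 z μ ≤ M}) :=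
  have hLam := lowerSemicontinuous_Lam G v₁ hδ S0
  have hLamZ := lowerSemicontinuous_LamZ G v₁ hδ S0
  ⟨hLam, hLamZ, fun M => (hLam.isClosed_preimage M).isCompact,
    fun z M => ((hLamZ z).isClosed_preimage M).isCompact⟩

/-- `Λ_{δ,𝒮₀}` and `Λ^z_{δ,𝒮₀}` are lower semicontinuous with
compact sublevel sets. -/
theorem orrw_Lam_lsc_compact {V : Type} [Fintype V] [LinearOrder V]
    (G : SimpleGraph V) [DecidableRel G.Adj] (hG : G.Connected)
    (hV : 3 ≤ Fintype.card V) (v₁ : V) (δ : ℝ) (hδ : 0 < δ)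
    (S0 : Set (Finset (Sym2 V))) (hS0ne : S0.Nonempty) (hS0sub : S0 ⊆ scrS G v₁)
    (hS0dec : DecreasingIn G v₁ S0) :
    LowerSemicontinuous (Lam G v₁ δ S0) ∧
    (∀ z : VSet G, LowerSemicontinuous (LamZ G v₁ δ S0 z)) ∧
    (∀ M : ℝ, 0 < M →
      IsCompact {μ : ProbMeas (VSet G) | Lam G v₁ δ S0 μ ≤ ((M : ℝ) : EReal)}) ∧
    (∀ z : VSet G, ∀ M : ℝ, 0 < M →
      IsCompact {μ : ProbMeas (VSet G) | LamZ G v₁ δ S0 z μ ≤ ((M : ℝ) : EReal)}) := by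
  obtain ⟨hLam, hLamZ, hLamCompact, hLamZCompact⟩ := orrw_Lam_lsc_compact_general G v₁ hδ S0
  exact ⟨hLam, hLamZ, fun M _ => hLamCompact M, fun z M _ => hLamZCompact z M⟩

end ORRW
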